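/- A Borel probability measure μ on K lies in ⋂_{n=1}^∞ (G*)^n(P(K)) if and only if μ = μ_H; that is, (for every n ≥ 1 there exists a Borel probability measure ν on K with μ = (G*)^n(ν)) holds exactly when μ equals the Hutchinson measure μ_H. -/

import Mathlib

/-!
Dually to `G*`, let `G f = (1/N) Σⱼ f ∘ γⱼ` on continuous functions, so `∫ f d(G* μ) = ∫ G f dμ`.
If `f` oscillates by at most `ε` on pairs of points at distance `≤ c r`, then `G f` does so on pairs
at distance `≤ r`. Iterating, `Gⁿ f` oscillates by at most `ε` on all of `K` once `f` does so at
scale `cⁿ diam K`; by uniform continuity this holds for `n` large. Hence for any two probability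
measures `ν₁, ν₂` the integrals of `f` against `(G*)ⁿ ν₁` and `(G*)ⁿ ν₂` differ by at most `2ε`
(`abs_integral_iterate_sub_le`). Applied to `μ = (G*)ⁿ ν` and `μH = (G*)ⁿ μH`, this shows that `μ`
and `μH` agree on continuous functions.
-/

open MeasureTheory
open scoped BigOperators ENNReal

/-- The dual map `G*(μ) = (1/N)·Σⱼ (γⱼ)_*μ` on Borel measures. -/
noncomputable def Gstar {K : Type*} [MeasurableSpace K] {N : ℕ} (γ : Fin N → K → K)
    (μ : Measure K) : Measure K :=
  (N : ℝ≥0∞)⁻¹ • ∑ j : Fin N, Measure.map (γ j) μ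

lemma isProbabilityMeasure_Gstar {K : Type*} [MeasurableSpace K] {N : ℕ} (hN : N ≠ 0)
    {γ : Fin N → K → K} (hγ : ∀ j, Measurable (γ j)) (μ : Measure K) [IsProbabilityMeasure μ] :
    IsProbabilityMeasure (Gstar γ μ) := by
  have h : ∀ j, (Measure.map (γ j) μ) Set.univ = 1 := fun j => by
    rw [Measure.map_apply (hγ j) MeasurableSet.univ]; simp
  constructor
  simp only [Gstar, Measure.smul_apply, Measure.finsetSum_apply, h, smul_eq_mul]
  simp only [Finset.sum_const, Finset.card_univ, Fintype.card_fin, nsmul_eq_mul, mul_one]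
  exact ENNReal.inv_mul_cancel (by exact_mod_cast hN) (ENNReal.natCast_ne_top N)

/-- The duality `∫ f d(G* μ) = ∫ (1/N) Σⱼ f ∘ γⱼ dμ`. -/
lemma integral_Gstar {K : Type*} [MetricSpace K] [CompactSpace K] [MeasurableSpace K]
    [BorelSpace K] {N : ℕ} {γ : Fin N → K → K} (hγ : ∀ j, Continuous (γ j))
    (μ : Measure K) [IsProbabilityMeasure μ] {f : K → ℝ} (hf : Continuous f) :
    ∫ x, f x ∂(Gstar γ μ) = ∫ x, (N : ℝ)⁻¹ * ∑ j, f (γ j x) ∂μ := by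
  have integrable_of_cont : ∀ (ν : Measure K) [IsFiniteMeasure ν] (g : K → ℝ), Continuous g → Integrable g ν :=
    fun ν _ g hg => hg.integrable_of_hasCompactSupport (HasCompactSupport.of_compactSpace g)
  have hmap : ∀ j, IsProbabilityMeasure (Measure.map (γ j) μ) := fun j =>
    Measure.isProbabilityMeasure_map (hγ j).measurable.aemeasurable
  rw [Gstar, integral_smul_measure, integral_finsetSum_measure fun j _ => integrable_of_cont _ f hf,
    integral_const_mul,
    integral_finsetSum _ fun j _ => integrable_of_cont _ (fun x => f (γ j x)) (hf.comp (hγ j))]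
  simp only [ENNReal.toReal_inv, ENNReal.toReal_natCast, smul_eq_mul]
  congr 1
  refine Finset.sum_congr rfl fun j _ => ?_
  exact integral_map (hγ j).measurable.aemeasurable hf.aestronglyMeasurable

/-- If `f` oscillates by at most `ε` at scale `cⁿ diam K`, then its integrals against the `n`-th
`G*`-iterates of two probability measures are `2ε`-close. -/
lemma abs_integral_iterate_sub_le {K : Type*} [MetricSpace K] [CompactSpace K] [MeasurableSpace K]
    [BorelSpace K] {N : ℕ} (hN : N ≠ 0) {γ : Fin N → K → K} (hγ : ∀ j, Continuous (γ j))
    {c ε : ℝ} (hc : 0 ≤ c) (hcontr : ∀ j x y, dist (γ j x) (γ j y) ≤ c * dist x y)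
    (ν₁ ν₂ : Measure K) [IsProbabilityMeasure ν₁] [IsProbabilityMeasure ν₂] (n : ℕ) :
    ∀ f : K → ℝ, Continuous f →
      (∀ x y, dist x y ≤ c ^ n * Metric.diam (Set.univ : Set K) → |f x - f y| ≤ ε) →
      |∫ x, f x ∂((Gstar γ)^[n] ν₁) - ∫ x, f x ∂((Gstar γ)^[n] ν₂)| ≤ 2 * ε := by
  induction n with
  | zero =>
    intro f hf hosc
    obtain ⟨x₀⟩ : Nonempty K := nonempty_of_isProbabilityMeasure ν₁
    have key : ∀ (ν : Measure K) [IsProbabilityMeasure ν], |∫ x, f x ∂ν - f x₀| ≤ ε := by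
      intro ν _
      have hi : Integrable f ν :=
        hf.integrable_of_hasCompactSupport (HasCompactSupport.of_compactSpace f)
      have h1 : ∫ x, f x ∂ν - f x₀ = ∫ x, (f x - f x₀) ∂ν := by
        rw [integral_sub hi (integrable_const _)]; simp
      rw [h1, ← Real.norm_eq_abs]
      refine (norm_integral_le_of_norm_le_const (C := ε) (.of_forall fun x => ?_)).trans
        (by simp)
      refine hosc x x₀ ?_
      simpa using Metric.dist_le_diam_of_mem isCompact_univ.isBounded (Set.mem_univ x)
        (Set.mem_univ x₀)
    have h1 := abs_le.1 (key ν₁)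
    have h2 := abs_le.1 (key ν₂)
    simp only [Function.iterate_zero, id]
    exact abs_le.2 ⟨by linarith, by linarith⟩
  | succ n ih =>
    intro f hf hosc
    have hprob : ∀ (ν : Measure K) [IsProbabilityMeasure ν],
        IsProbabilityMeasure ((Gstar γ)^[n] ν) := by
      intro ν _
      clear ih hosc
      induction n with
      | zero => simpa
      | succ n ih =>
        rw [Function.iterate_succ_apply']
        exact isProbabilityMeasure_Gstar hN (fun j => (hγ j).measurable) _
    have := hprob ν₁
    have := hprob ν₂
    rw [Function.iterate_succ_apply', Function.iterate_succ_apply', integral_Gstar hγ _ hf,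
      integral_Gstar hγ _ hf]
    refine ih _ (by fun_prop) fun x y hxy => ?_
    have hNpos : (0 : ℝ) < N := by exact_mod_cast Nat.pos_of_ne_zero hN
    rw [← mul_sub, ← Finset.sum_sub_distrib, abs_mul, abs_of_pos (inv_pos.2 hNpos),
      inv_mul_le_iff₀ hNpos]
    calc |∑ j, (f (γ j x) - f (γ j y))| ≤ ∑ j, |f (γ j x) - f (γ j y)| :=
          Finset.abs_sum_le_sum_abs _ _
      _ ≤ ∑ _j : Fin N, ε := Finset.sum_le_sum fun j _ => hosc _ _ <| (hcontr j x y).trans <| by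
          rw [pow_succ', mul_assoc]; exact mul_le_mul_of_nonneg_left hxy hc
      _ = N * ε := by simp

/-- A Borel probability measure `μ` on `K` lies in
`⋂_{n≥1} (G*)^n(P(K))` if and only if `μ = μ_H`, the Hutchinson measure. -/
theorem mem_iInter_Gstar_iff_eq_hutchinson
    {K : Type*} [MetricSpace K] [CompactSpace K]
    [MeasurableSpace K] [BorelSpace K]
    (N : ℕ) (hN : 2 ≤ N)
    (γ : Fin N → K → K)
    (c c' : ℝ) (hc'pos : 0 < c') (hc'c : c' ≤ c) (hc1 : c < 1)
    (hcontr : ∀ (i : Fin N) (x y : K),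
      c' * dist x y ≤ dist (γ i x) (γ i y) ∧ dist (γ i x) (γ i y) ≤ c * dist x y)
    (hss : ∀ x : K, ∃ (i : Fin N) (y : K), γ i y = x)
    (μH : Measure K) (hμHprob : IsProbabilityMeasure μH)
    (hμHfix : Gstar γ μH = μH)
    (hμHuniq : ∀ ν : Measure K, IsProbabilityMeasure ν → Gstar γ ν = ν → ν = μH) :
    ∀ μ : Measure K, IsProbabilityMeasure μ →
      ((∀ n : ℕ, 1 ≤ n → ∃ ν : Measure K, IsProbabilityMeasure ν ∧ μ = (Gstar γ)^[n] ν) ↔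
        μ = μH) := by
  intro μ hμ
  have hfix : ∀ n, (Gstar γ)^[n] μH = μH := fun n => Function.iterate_fixed hμHfix n
  refine ⟨fun h => ?_, fun h n _ => ⟨μH, hμHprob, h.trans (hfix n).symm⟩⟩
  have hc0 : 0 ≤ c := hc'pos.le.trans hc'c
  have hγ : ∀ j, Continuous (γ j) := fun j =>
    (LipschitzWith.of_dist_le_mul (K := ⟨c, hc0⟩) fun x y => (hcontr j x y).2).continuous
  refine ext_of_forall_integral_eq_of_IsFiniteMeasure fun f => ?_
  refine eq_of_abs_sub_le_all fun ε hε => ?_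
  obtain ⟨δ, hδ, hfδ⟩ := Metric.uniformContinuous_iff.1
    (CompactSpace.uniformContinuous_of_continuous f.continuous) (ε / 2) (half_pos hε)
  have hlim : Filter.Tendsto (fun n : ℕ => c ^ n * Metric.diam (Set.univ : Set K)) Filter.atTop
      (nhds 0) := by
    simpa using (tendsto_pow_atTop_nhds_zero_of_lt_one hc0 hc1).mul_const
      (Metric.diam (Set.univ : Set K))
  obtain ⟨n, hn, hn1⟩ :=
    ((hlim.eventually (gt_mem_nhds hδ)).and (Filter.eventually_ge_atTop 1)).exists
  obtain ⟨ν, hν, rfl⟩ := h n hn1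
  have := abs_integral_iterate_sub_le (ε := ε / 2) (by omega) hγ hc0
    (fun j x y => (hcontr j x y).2) ν μH n f f.continuous
    fun x y hxy => (hfδ (hxy.trans_lt hn)).le
  rw [hfix n] at this
  linarith
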